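/- arXiv:2603.10288 — 2 statements merged into one kernel-verified Lean document; each statement's English description precedes it below -/
import Mathlib

section
/- Proposition 4.2. Let ℰ = (𝒳, Σ, {P_θ}_{θ∈Θ}) be a statistical model and μ a σ-finite measure on (𝒳,Σ). If ℰ ≪ μ, then there exists a countable subset {θ_n}_{n∈ℕ} ⊆ Θ such that for every sequence (c_n)_{n∈ℕ} of strictly positive reals with Σ_{n∈ℕ} c_n = 1, the set function P : Σ → ℝ given by P := Σ_{n∈ℕ} c_n·P_{θ_n} is a probability measure satisfying ℰ ≡ P, P ≪ μ, and dP/dμ = Σ_{n∈ℕ} c_n·(dP_{θ_n}/dμ) μ-a.e. -/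
open MeasureTheory

noncomputable section

universe u v w u'

/-- `f` is a (pointwise nonnegative, measurable) density of `P` w.r.t. `μ`,
i.e. a version of the Radon–Nikodym derivative `dP/dμ`. -/
def IsDensity {X : Type*} [MeasurableSpace X] (P μ : Measure X) (f : X → ℝ) : Prop :=
  Measurable f ∧ (∀ x, 0 ≤ f x) ∧ P = μ.withDensity (fun x => ENNReal.ofReal (f x))

/-- The proportionality set `D(x, Θ')` determined by a family of densities. -/
def DSet {X : Type*} {Θ : Type*} (f : Θ → X → ℝ) (x : X) (Θ' : Set Θ) : Set X :=
  {y | ∃ h : ℝ, 0 < h ∧ ∀ θ ∈ Θ', f θ y = f θ x * h}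

/-- A statistic `T` is sufficient for the model `{P θ}`. -/
def IsSufficientStat {X : Type u} [mX : MeasurableSpace X] {Θ : Type v}
    (P : Θ → Measure X) {T' : Type w} [mT : MeasurableSpace T'] (T : X → T') : Prop :=
  Measurable T ∧
  ∀ E : Set X, MeasurableSet E → ∃ κ : T' → ℝ, Measurable κ ∧
    ∀ θ : Θ, (P θ)[E.indicator (fun _ => (1 : ℝ)) | MeasurableSpace.comap T mT] =ᵐ[P θ] κ ∘ T

/-- A statistic `T` is minimal sufficient: it is sufficient and it factors
`P θ`-a.e. (for every `θ`) through every sufficient statistic via a measurable map. -/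
def IsMinimalSufficientStat {X : Type u} [mX : MeasurableSpace X] {Θ : Type v}
    (P : Θ → Measure X) {T' : Type w} [mT : MeasurableSpace T'] (T : X → T') : Prop :=
  IsSufficientStat P T ∧
  ∀ (S' : Type u') (mS : MeasurableSpace S') (S : X → S'),
    @IsSufficientStat X mX Θ P S' mS S →
      ∃ g : S' → T', @Measurable S' T' mS mT g ∧ ∀ θ : Θ, T =ᵐ[P θ] g ∘ S

/-- A measurable space is analytic Borel iff it is separable (countably generated with
measurable singletons) and it is the image of a standard Borel space under a surjective
measurable map. -/
def IsAnalyticBorel (X : Type u) [mX : MeasurableSpace X] : Prop :=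
  MeasurableSpace.CountablyGenerated X ∧ MeasurableSingletonClass X ∧
  ∃ (Y : Type u) (mY : MeasurableSpace Y), @StandardBorelSpace Y mY ∧
    ∃ g : Y → X, @Measurable Y X mY mX g ∧ Function.Surjective g

/-- A sub-σ-algebra `m ⊆ Σ` is sufficient for the model `{P θ}`. -/
def IsSufficientSubalgebra {X : Type u} [mX : MeasurableSpace X] {Θ : Type v}
    (P : Θ → Measure X) (m : MeasurableSpace X) : Prop :=
  m ≤ mX ∧ ∀ E : Set X, MeasurableSet[mX] E → ∃ κ : X → ℝ, Measurable[m] κ ∧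
    ∀ θ : Θ, (P θ)[E.indicator (fun _ => (1 : ℝ)) | m] =ᵐ[P θ] κ

/-- The collection `𝔑_ℰ` of measurable sets null under every `P θ`. -/
def modelNullSets {X : Type u} [mX : MeasurableSpace X] {Θ : Type v}
    (P : Θ → Measure X) : Set (Set X) :=
  {N | MeasurableSet N ∧ ∀ θ, P θ N = 0}

/-- The σ-algebra `𝔄̄^ℰ` generated by `𝔄 ∪ 𝔑_ℰ`. -/
def completionAlg {X : Type u} [mX : MeasurableSpace X] {Θ : Type v}
    (P : Θ → Measure X) (m : MeasurableSpace X) : MeasurableSpace X :=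
  MeasurableSpace.generateFrom ({s | MeasurableSet[m] s} ∪ @modelNullSets X mX Θ P)

/-- A sub-σ-algebra is minimal sufficient iff it is sufficient and contained in the
`𝔑_ℰ`-completion of every sufficient sub-σ-algebra. -/
def IsMinimalSufficientSubalgebra {X : Type u} [mX : MeasurableSpace X] {Θ : Type v}
    (P : Θ → Measure X) (m : MeasurableSpace X) : Prop :=
  @IsSufficientSubalgebra X mX Θ P m ∧
  ∀ m' : MeasurableSpace X, @IsSufficientSubalgebra X mX Θ P m' →
    m ≤ @completionAlg X mX Θ P m'

/-- The total variation distance `d_ℰ(θ₁, θ₂) = sup_{E ∈ Σ} |P θ₁ E - P θ₂ E|`. -/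
def tvDist {X : Type u} [MeasurableSpace X] {Θ : Type v} (P : Θ → Measure X)
    (θ₁ θ₂ : Θ) : ℝ :=
  ⨆ E : {E : Set X // MeasurableSet E}, |(P θ₁ E.1).toReal - (P θ₂ E.1).toReal|

/-- The coarsest topology `τ⟨ℰ⟩` on `Θ` making `θ ↦ P θ E` continuous for every `E ∈ Σ`. -/
def modelTopology {X : Type u} [MeasurableSpace X] {Θ : Type v} (P : Θ → Measure X) :
    TopologicalSpace Θ :=
  ⨅ E : {E : Set X // MeasurableSet E},
    TopologicalSpace.induced (fun θ => (P θ E.1).toReal) inferInstance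

/-
The heart of the matter is the Halmos–Savage lemma: a family of measures dominated by `μ` is
dominated by the sum of some sequence of its members. Every `ν ≪ μ` is equivalent to the restriction
of `μ` to a carrier, the complement of a largest `ν`-null set, so it suffices to choose a sequence
of members whose carriers cover every other carrier up to a `μ`-null set. Such a sequence, like the
largest null set itself, is found by exhaustion: for a finite measure equivalent to `μ`, choose a
sequence of sets in the given family whose union has maximal measure.
-/

section Exhaustion

variable {X : Type*} [MeasurableSpace X] {ι : Type*} [Nonempty ι]

theorem exists_seq_forall_measure_iUnion_le (μ : Measure X) (S : ι → Set X) :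
    ∃ t : ℕ → ι, ∀ u : ℕ → ι, μ (⋃ n, S (u n)) ≤ μ (⋃ n, S (t n)) := by
  let unionMeasure : (ℕ → ι) → ENNReal := fun u => μ (⋃ n, S (u n))
  obtain ⟨r, -, hr, hr_mem⟩ := exists_seq_tendsto_sSup (Set.range_nonempty unionMeasure)
    (OrderTop.bddAbove _)
  choose q hq using hr_mem
  let t : ℕ → ι := fun n => q n.unpair.1 n.unpair.2
  have ht : ⋃ n, S (t n) = ⋃ k, ⋃ m, S (q k m) := Set.iUnion_unpair fun k m => S (q k m)
  have hrt (k : ℕ) : r k ≤ unionMeasure t := by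
    rw [← hq k]
    exact measure_mono (ht ▸ Set.subset_iUnion (fun k => ⋃ m, S (q k m)) k)
  exact ⟨t, fun u => (le_sSup (Set.mem_range_self u)).trans (le_of_tendsto' hr hrt)⟩

theorem exists_seq_forall_ae_le_iUnion_of_isFiniteMeasure (μ : Measure X) [IsFiniteMeasure μ]
    {S : ι → Set X} (hS : ∀ i, NullMeasurableSet (S i) μ) :
    ∃ t : ℕ → ι, ∀ i, S i ≤ᵐ[μ] ⋃ n, S (t n) := by
  obtain ⟨t, ht⟩ := exists_seq_forall_measure_iUnion_le μ S
  refine ⟨t, fun i => ?_⟩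
  let t' : ℕ → ι := fun n => n.casesOn i t
  have ht' : ⋃ n, S (t' n) = S i ∪ ⋃ n, S (t n) := (sup_iSup_nat_succ fun n => S (t' n)).symm
  have hunion : ⋃ n, S (t n) =ᵐ[μ] (S i ∪ ⋃ n, S (t n) : Set X) :=
    ae_eq_of_subset_of_measure_ge Set.subset_union_right (ht' ▸ ht t')
      (.iUnion fun n => hS (t n)) (measure_ne_top _ _)
  exact Set.subset_union_left.eventuallyLE.trans hunion.symm.le

theorem exists_seq_forall_ae_le_iUnion (μ : Measure X) [SFinite μ]
    {S : ι → Set X} (hS : ∀ i, NullMeasurableSet (S i) μ) :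
    ∃ t : ℕ → ι, ∀ i, S i ≤ᵐ[μ] ⋃ n, S (t n) := by
  obtain ⟨t, ht⟩ := exists_seq_forall_ae_le_iUnion_of_isFiniteMeasure μ.toFinite
    fun i => (hS i).mono_ac (toFinite_absolutelyContinuous μ)
  exact ⟨t, fun i => (absolutelyContinuous_toFinite μ).ae_le (ht i)⟩

end Exhaustion

section Domination

variable {X : Type*} [MeasurableSpace X]

theorem exists_measurableSet_restrict_equivalent {μ ν : Measure X} [SFinite μ] (hνμ : ν ≪ μ) :
    ∃ S, MeasurableSet S ∧ ν ≪ μ.restrict S ∧ μ.restrict S ≪ ν := by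
  let NullSet := {A : Set X // MeasurableSet A ∧ ν A = 0}
  have : Nonempty NullSet := ⟨∅, .empty, measure_empty⟩
  obtain ⟨t, ht⟩ := exists_seq_forall_ae_le_iUnion μ
    fun A : NullSet => A.2.1.nullMeasurableSet
  let N : Set X := ⋃ n, (t n : Set X)
  have hN : MeasurableSet N := .iUnion fun n => (t n).2.1
  have hνN : ν N = 0 := measure_iUnion_null fun n => (t n).2.2
  refine ⟨Nᶜ, hN.compl, ?_, .mk fun A hA hνA => ?_⟩
  · have hν : ν.restrict Nᶜ = ν :=
      Measure.restrict_eq_self_of_ae_mem (measure_eq_zero_iff_ae_notMem.mp hνN)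
    exact hν ▸ hνμ.restrict Nᶜ
  · rw [Measure.restrict_apply hA, ← Set.sdiff_eq]
    exact ae_le_set.mp (ht ⟨A, hA, hνA⟩)

theorem exists_seq_forall_absolutelyContinuous_sum {ι : Type*} [Nonempty ι] {P : ι → Measure X}
    {μ : Measure X} [SFinite μ] (hP : ∀ i, P i ≪ μ) :
    ∃ t : ℕ → ι, ∀ i, P i ≪ Measure.sum fun n => P (t n) := by
  choose S hS hPS hSP using fun i => exists_measurableSet_restrict_equivalent (hP i)
  obtain ⟨t, ht⟩ := exists_seq_forall_ae_le_iUnion μ fun i => (hS i).nullMeasurableSet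
  have hcover (i : ι) : μ.restrict (S i) ≪ Measure.sum fun n => μ.restrict (S (t n)) :=
    ((Measure.restrict_mono_ae (ht i)).trans Measure.restrict_iUnion_le).absolutelyContinuous
  have hsum : (Measure.sum fun n => μ.restrict (S (t n))) ≪ Measure.sum fun n => P (t n) :=
    Measure.absolutelyContinuous_sum_left fun n =>
      Measure.absolutelyContinuous_sum_right n (hSP (t n))
  exact ⟨t, fun i => (hPS i).trans ((hcover i).trans hsum)⟩

end Domination

section WeightedSum

variable {X : Type*} [MeasurableSpace X] {ι : Type*} {c : ι → ENNReal}

theorem isProbabilityMeasure_sum_smul (hc : ∑' i, c i = 1) (P : ι → Measure X)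
    [∀ i, IsProbabilityMeasure (P i)] :
    IsProbabilityMeasure (Measure.sum fun i => c i • P i) where
  measure_univ := by simp [hc]

theorem absolutelyContinuous_sum_smul (hc : ∀ i, c i ≠ 0) (P : ι → Measure X) :
    Measure.sum P ≪ Measure.sum fun i => c i • P i :=
  Measure.absolutelyContinuous_sum_left fun i =>
    Measure.absolutelyContinuous_sum_right i (Measure.absolutelyContinuous_smul (hc i))

theorem rnDeriv_sum [Countable ι] (P : ι → Measure X) (μ : Measure X) [SigmaFinite μ]
    [∀ i, (P i).HaveLebesgueDecomposition μ] :
    (Measure.sum P).rnDeriv μ =ᵐ[μ] ∑' i, (P i).rnDeriv μ := by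
  refine (Measure.eq_rnDeriv (s := .sum fun i => (P i).singularPart μ) (by fun_prop)
    (by simp [Measure.mutuallySingular_singularPart]) ?_).symm
  rw [withDensity_tsum fun i => Measure.measurable_rnDeriv _ _, Measure.sum_add_sum]
  simp only [Measure.singularPart_add_rnDeriv]

theorem rnDeriv_sum_smul [Countable ι] (hc : ∀ i, c i ≠ ⊤) (P : ι → Measure X)
    [∀ i, SigmaFinite (P i)] (μ : Measure X) [SigmaFinite μ] :
    (Measure.sum fun i => c i • P i).rnDeriv μ =ᵐ[μ] fun x => ∑' i, c i * (P i).rnDeriv μ x := by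
  have hsmul : ∀ᵐ x ∂μ, ∀ i, (c i • P i).rnDeriv μ x = c i * (P i).rnDeriv μ x :=
    ae_all_iff.mpr fun i => Measure.rnDeriv_smul_left_of_ne_top' (P i) μ (hc i)
  filter_upwards [rnDeriv_sum (fun i => c i • P i) μ, hsmul] with x hsum hx
  rw [hsum, tsum_apply (Pi.summable.mpr fun _ => ENNReal.summable)]
  exact tsum_congr hx

end WeightedSum

/-- Proposition 4.2. -/
theorem prop_4_2
    {X : Type u} [mX : MeasurableSpace X] {Θ : Type v} [Nonempty Θ]
    (P : Θ → Measure X) (hP : ∀ θ, IsProbabilityMeasure (P θ))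
    (μ : Measure X) (hμ : SigmaFinite μ) (hac : ∀ θ, P θ ≪ μ) :
    ∃ θseq : ℕ → Θ, ∀ c : ℕ → ℝ, (∀ n, 0 < c n) → (∑' n, c n) = 1 →
      IsProbabilityMeasure (Measure.sum fun n => ENNReal.ofReal (c n) • P (θseq n)) ∧
      (∀ s : Set X, MeasurableSet s →
        ((Measure.sum fun n => ENNReal.ofReal (c n) • P (θseq n)) s = 0 ↔
          ∀ θ : Θ, P θ s = 0)) ∧
      (Measure.sum fun n => ENNReal.ofReal (c n) • P (θseq n)) ≪ μ ∧
      (Measure.sum fun n => ENNReal.ofReal (c n) • P (θseq n)).rnDeriv μ =ᵐ[μ]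
        fun x => ∑' n, ENNReal.ofReal (c n) * (P (θseq n)).rnDeriv μ x := by
  obtain ⟨θseq, hθseq⟩ := exists_seq_forall_absolutelyContinuous_sum hac
  refine ⟨θseq, fun c hc hsum => ?_⟩
  have hsummable : Summable c := by
    by_contra h
    simp [tsum_eq_zero_of_not_summable h] at hsum
  have hweights : ∑' n, ENNReal.ofReal (c n) = 1 := by
    rw [← ENNReal.ofReal_tsum_of_nonneg (fun n => (hc n).le) hsummable, hsum, ENNReal.ofReal_one]
  have hdom (θ : Θ) : P θ ≪ Measure.sum fun n => ENNReal.ofReal (c n) • P (θseq n) :=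
    (hθseq θ).trans (absolutelyContinuous_sum_smul (fun n => (ENNReal.ofReal_pos.mpr (hc n)).ne') _)
  refine ⟨isProbabilityMeasure_sum_smul hweights _, fun s hs => ⟨fun h θ => hdom θ h, fun h => ?_⟩,
    Measure.absolutelyContinuous_sum_left fun n => (hac _).smul_left _,
    rnDeriv_sum_smul (fun n => ENNReal.ofReal_ne_top) _ μ⟩
  simp [Measure.sum_apply _ hs, h]
end
end

section
/- Lemma (Appendix to Corollary on a.e. factorization). Let (𝒳,Σ,ℙ) be a probability space with (𝒳,Σ) an analytic Borel space, (𝒴,Σ_𝒴) a separable measurable space, and f : 𝒳 → 𝒴 measurable. If α : 𝒴 → ℝ is injective and Σ_𝒴 = α⁻¹(ℬ_ℝ), where ℬ_ℝ is the Borel σ-algebra of ℝ, then there exists a Borel measurable function β : ℝ → 𝒴 such that β ∘ α ∘ f = f ℙ-a.e. -/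
open MeasureTheory

noncomputable section

universe u v w u'

/-!
Analytic sets are universally measurable: if `φ : (ℕ → ℕ) → R` is continuous, the measure of its
range is approximated by the measures of the compact sets `φ '' {x | ∀ i, x i ≤ k i}` (Choquet).
The range of `α ∘ f` is analytic, hence conull for the law of `α ∘ f`. Therefore `α ∘ α⁻¹` is
almost everywhere the identity, which makes `α⁻¹` almost everywhere equal to a measurable map.
-/

section

open Set Filter Topology Function
open scoped ENNReal

theorem exists_lt_measure_image_inter_le {E R : Type*} [MeasurableSpace R] (μ : Measure R)
    (φ : E → R) (h : E → ℕ) {D : Set E} {c : ℝ≥0∞} (hc : c < μ (φ '' D)) :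
    ∃ m, c < μ (φ '' (D ∩ {x | h x ≤ m})) := by
  have h_mono : Monotone fun m => φ '' (D ∩ {x | h x ≤ m}) := fun a b hab =>
    image_mono (inter_subset_inter_right D fun x (hx : h x ≤ a) => hx.trans hab)
  have h_union : ⋃ m, φ '' (D ∩ {x | h x ≤ m}) = φ '' D := by
    rw [← image_iUnion, ← inter_iUnion, iUnion_eq_univ_iff.2 fun x => ⟨h x, le_refl (h x)⟩,
      inter_univ]
  rwa [← h_union, h_mono.measure_iUnion, lt_iSup_iff] at hc

theorem exists_forall_lt_measure_image_le {E R : Type*} [MeasurableSpace R] (μ : Measure R)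
    (φ : E → R) (h : ℕ → E → ℕ) {c : ℝ≥0∞} (hc : c < μ (range φ)) :
    ∃ k : ℕ → ℕ, ∀ n, c < μ (φ '' {x | ∀ i < n, h i x ≤ k i}) := by
  choose! m hm using fun (D : Set E) (i : ℕ) (hD : c < μ (φ '' D)) =>
    exists_lt_measure_image_inter_le μ φ (h i) hD
  let D : ℕ → Set E := fun n => Nat.rec univ (fun i D => D ∩ {x | h i x ≤ m D i}) n
  have hD (n : ℕ) : D n = {x | ∀ i < n, h i x ≤ m (D i) i} := by
    induction n with
    | zero => simp [D]
    | succ n ih =>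
      calc D (n + 1) = D n ∩ {x | h n x ≤ m (D n) n} := rfl
        _ = {x | ∀ i < n, h i x ≤ m (D i) i} ∩ {x | h n x ≤ m (D n) n} := by rw [← ih]
        _ = {x | ∀ i < n + 1, h i x ≤ m (D i) i} := by
          ext x
          exact Nat.forall_lt_succ_right.symm
  refine ⟨fun i => m (D i) i, fun n => hD n ▸ ?_⟩
  induction n with
  | zero => rwa [← image_univ] at hc
  | succ n ih => exact hm (D n) n ih

theorem isCompact_Iic_of_orderBot {E : Type*} [TopologicalSpace E] [Preorder E] [OrderBot E]
    [CompactIccSpace E] (k : E) : IsCompact (Iic k) :=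
  Icc_bot (a := k) ▸ isCompact_Icc

theorem exists_forall_lt_le_subset_of_Iic_subset {k : ℕ → ℕ} {U : Set (ℕ → ℕ)} (hU : IsOpen U)
    (hkU : Iic k ⊆ U) : ∃ n, {x : ℕ → ℕ | ∀ i < n, x i ≤ k i} ⊆ U := by
  by_contra! h
  simp only [not_subset] at h
  choose x hxk hxU using h
  obtain ⟨y, hyk, σ, hσ, h_lim⟩ :=
    (isCompact_Iic_of_orderBot k).tendsto_subseq fun n => (inf_le_right : x n ⊓ k ≤ k)
  -- `x n` and its truncation `x n ⊓ k` agree on the first `n` coordinates.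
  have hx_lim : Tendsto (x ∘ σ) atTop (𝓝 y) := by
    rw [tendsto_pi_nhds] at h_lim ⊢
    refine fun i => (h_lim i).congr' ?_
    filter_upwards [eventually_gt_atTop i] with n hn
    exact inf_eq_left.2 (hxk (σ n) i (hn.trans_le (hσ.id_le n)))
  obtain ⟨n, hn⟩ := (hx_lim.eventually (hU.mem_nhds (hkU hyk))).exists
  exact hxU (σ n) hn

theorem innerRegularWRT_isCompact_analyticSet {R : Type*} [TopologicalSpace R] [MeasurableSpace R]
    (μ : Measure R) [μ.OuterRegular] : μ.InnerRegularWRT IsCompact AnalyticSet := by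
  intro A hA r hr
  rw [AnalyticSet] at hA
  obtain rfl | ⟨φ, hφ, rfl⟩ := hA
  · simp at hr
  obtain ⟨c, hrc, hc⟩ := exists_between hr
  obtain ⟨k, hk⟩ := exists_forall_lt_measure_image_le μ φ (fun i x => x i) hc
  refine ⟨φ '' Iic k, image_subset_range φ _, (isCompact_Iic_of_orderBot k).image hφ,
    hrc.trans_le ?_⟩
  rw [Set.measure_eq_iInf_isOpen]
  refine le_iInf₂ fun U hkU => le_iInf fun hU => ?_
  obtain ⟨n, hn⟩ :=
    exists_forall_lt_le_subset_of_Iic_subset (hU.preimage hφ) (image_subset_iff.1 hkU)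
  exact (hk n).le.trans (measure_mono (image_subset_iff.2 hn))

theorem nullMeasurableSet_of_innerRegularWRT {R : Type*} [MeasurableSpace R] {μ : Measure R}
    {p q : Set R → Prop} {s : Set R} (h : μ.InnerRegularWRT p q)
    (hp : ∀ K, p K → NullMeasurableSet K μ) (hs : q s) (hμs : μ s ≠ ∞) :
    NullMeasurableSet s μ := by
  obtain hs_zero | hs_pos := eq_zero_or_pos (μ s)
  · exact .of_null hs_zero
  obtain ⟨u, -, hu, hu_lim⟩ := exists_seq_strictMono_tendsto' hs_pos
  choose K hKs hpK huK using fun n => h hs (u n) (hu n).2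
  have hK_union : NullMeasurableSet (⋃ n, K n) μ := .iUnion fun n => hp (K n) (hpK n)
  have h_le : μ s ≤ μ (⋃ n, K n) := le_of_tendsto' hu_lim fun n =>
    (huK n).le.trans (measure_mono (subset_iUnion K n))
  exact hK_union.congr (ae_eq_of_subset_of_measure_ge (iUnion_subset hKs) h_le hK_union hμs)

section Metrizable

variable {R : Type*} [TopologicalSpace R] [TopologicalSpace.MetrizableSpace R]
  [MeasurableSpace R] [BorelSpace R]

theorem nullMeasurableSet_of_analyticSet {A : Set R} (hA : AnalyticSet A) (μ : Measure R)
    [SFinite μ] : NullMeasurableSet A μ :=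
  (nullMeasurableSet_of_innerRegularWRT (innerRegularWRT_isCompact_analyticSet μ.toFinite)
    (fun _ hK => hK.measurableSet.nullMeasurableSet) hA (measure_ne_top _ A)).mono_ac
    (absolutelyContinuous_toFinite μ)

theorem ae_map_mem_range_of_standardBorelSpace [SecondCountableTopology R]
    {X Z : Type*} [MeasurableSpace X] [MeasurableSpace Z] [StandardBorelSpace Z]
    {g : Z → X} (hg : Measurable g) (hg_surj : Surjective g) {h : X → R} (hh : Measurable h)
    (μ : Measure X) [SFinite μ] : ∀ᵐ r ∂μ.map h, r ∈ range h := by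
  have h_analytic : AnalyticSet (range h) := by
    rw [← hg_surj.range_comp h, ← image_univ]
    exact MeasurableSet.univ.analyticSet_image (hh.comp hg)
  have h_null : NullMeasurableSet (range h) (μ.map h) :=
    nullMeasurableSet_of_analyticSet h_analytic _
  rw [ae_iff, ← compl_ofPred, ofPred_mem_eq, Measure.map_apply₀ hh.aemeasurable h_null.compl,
    preimage_compl, preimage_range, compl_univ, measure_empty]

end Metrizable

theorem aemeasurable_invFun_of_ae_mem_range {R Y : Type*} [mR : MeasurableSpace R]
    [MeasurableSpace.CountablyGenerated R] [mY : MeasurableSpace Y] [Nonempty Y] {α : Y → R}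
    (hα : mY = mR.comap α) {μ : Measure R} (h : ∀ᵐ r ∂μ, r ∈ range α) :
    AEMeasurable (invFun α) μ := by
  have : MeasurableSpace.CountablyGenerated Y := hα ▸ .comap α
  have h_rightInv : α ∘ invFun α =ᵐ[μ] id := h.mono fun r hr => invFun_eq hr
  have h_null : NullMeasurable (α ∘ invFun α) μ :=
    measurable_id.nullMeasurable.congr h_rightInv.symm
  have h_null_invFun : NullMeasurable (invFun α) μ := by
    intro s hs
    obtain ⟨t, ht, rfl⟩ : MeasurableSet[mR.comap α] s := hα ▸ hs
    exact h_null ht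
  exact h_null_invFun.aemeasurable

theorem lemma_ae_section_general {X Y Z R : Type*} [MeasurableSpace X] (μ : Measure X) [SFinite μ]
    [MeasurableSpace Z] [StandardBorelSpace Z] {g : Z → X} (hg : Measurable g)
    (hg_surj : Surjective g) [TopologicalSpace R] [TopologicalSpace.MetrizableSpace R]
    [SecondCountableTopology R] [mR : MeasurableSpace R] [BorelSpace R]
    [mY : MeasurableSpace Y] [Nonempty Y] {f : X → Y} (hf : Measurable f)
    {α : Y → R} (hα : Injective α) (hα_comap : mY = mR.comap α) :
    ∃ β : R → Y, Measurable β ∧ (fun x => β (α (f x))) =ᵐ[μ] f := by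
  have hαf : Measurable (α ∘ f) := (measurable_iff_comap_le.2 hα_comap.ge).comp hf
  have h_range : ∀ᵐ r ∂μ.map (α ∘ f), r ∈ range α :=
    (ae_map_mem_range_of_standardBorelSpace hg hg_surj hαf μ).mono
      fun _ hr => range_comp_subset_range f α hr
  obtain ⟨β, hβ, hβ_ae⟩ := aemeasurable_invFun_of_ae_mem_range hα_comap h_range
  refine ⟨β, hβ, ?_⟩
  filter_upwards [ae_of_ae_map hαf.aemeasurable hβ_ae] with x hx
  exact hx.symm.trans (leftInverse_invFun hα (f x))

end

/-- Lemma (appendix to the a.e. factorization corollary). -/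
theorem lemma_ae_section
    {X : Type u} [mX : MeasurableSpace X] (ℙ : Measure X)
    (hprob : IsProbabilityMeasure ℙ) (hX : IsAnalyticBorel X)
    {Y : Type v} [mY : MeasurableSpace Y]
    (hYcg : MeasurableSpace.CountablyGenerated Y) (hYsing : MeasurableSingletonClass Y)
    (f : X → Y) (hf : Measurable f)
    (α : Y → ℝ) (hα : Function.Injective α)
    (hcomap : mY = MeasurableSpace.comap α Real.measurableSpace) :
    ∃ β : ℝ → Y, Measurable β ∧ (fun x => β (α (f x))) =ᵐ[ℙ] f := by
  obtain ⟨-, -, Z, mZ, hZ, g, hg, hg_surj⟩ := hX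
  have : Nonempty Y := (nonempty_of_isProbabilityMeasure ℙ).map f
  exact lemma_ae_section_general ℙ hg hg_surj hf hα hcomap
end
end
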